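/- Let p(m) ∝ φ(m; μ, Σ) Φ(y v'm) be the probit-tilted multivariate Gaussian with Σ positive definite, v a selection vector and y ∈ {-1,1}. Then for the quadratic form along v, the posterior variance satisfies v' Σ⁺ v < v' Σ v, where Σ⁺ is the covariance of p; i.e., the measured coordinate's marginal variance strictly decreases after a probit update. -/

import Mathlib

open MeasureTheory Matrix

noncomputable def stdPdf (x : ℝ) : ℝ :=
  (Real.sqrt (2 * Real.pi))⁻¹ * Real.exp (-x ^ 2 / 2)

noncomputable def stdCdf (x : ℝ) : ℝ := ∫ u in Set.Iic x, stdPdf u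

noncomputable def mvPdf {n : ℕ} (μ : Fin n → ℝ) (S : Matrix (Fin n) (Fin n) ℝ)
    (x : Fin n → ℝ) : ℝ :=
  (Real.sqrt ((2 * Real.pi) ^ n * S.det))⁻¹ *
    Real.exp (-(1 / 2) * ((x - μ) ⬝ᵥ (S⁻¹ *ᵥ (x - μ))))

theorem stdPdf_pos (x : ℝ) : 0 < stdPdf x := by
  unfold stdPdf; positivity

theorem continuous_stdPdf : Continuous stdPdf := by
  unfold stdPdf; fun_prop

theorem stdPdf_eq_gaussianPDFReal : stdPdf = ProbabilityTheory.gaussianPDFReal 0 1 := by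
  ext x; simp [stdPdf, ProbabilityTheory.gaussianPDFReal]

theorem integrable_stdPdf : Integrable stdPdf :=
  stdPdf_eq_gaussianPDFReal ▸ ProbabilityTheory.integrable_gaussianPDFReal 0 1

theorem integral_stdPdf : ∫ x, stdPdf x = 1 := by
  rw [stdPdf_eq_gaussianPDFReal]
  exact ProbabilityTheory.integral_gaussianPDFReal_eq_one 0 one_ne_zero

theorem stdPdf_le_one (x : ℝ) : stdPdf x ≤ 1 := by
  unfold stdPdf
  refine mul_le_one₀ (inv_le_one_of_one_le₀ ?_) (by positivity) ?_
  · rw [Real.one_le_sqrt]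
    linarith [Real.pi_gt_three]
  · rw [Real.exp_le_one_iff]
    nlinarith [sq_nonneg x]

theorem stdCdf_le_one (x : ℝ) : stdCdf x ≤ 1 :=
  (setIntegral_le_integral integrable_stdPdf (ae_of_all _ fun t => (stdPdf_pos t).le)).trans_eq
    integral_stdPdf

theorem stdCdf_pos (x : ℝ) : 0 < stdCdf x := by
  unfold stdCdf
  rw [setIntegral_pos_iff_support_of_nonneg_ae (ae_of_all _ fun t => (stdPdf_pos t).le)
    integrable_stdPdf.integrableOn]
  simp [Function.support_eq_univ fun t => (stdPdf_pos t).ne']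

theorem hasDerivAt_stdCdf (x : ℝ) : HasDerivAt stdCdf (stdPdf x) x := by
  have h : stdCdf = fun u => stdCdf 0 + ∫ t in (0 : ℝ)..u, stdPdf t := by
    ext u
    rw [← intervalIntegral.integral_Iic_sub_Iic integrable_stdPdf.integrableOn
      integrable_stdPdf.integrableOn, stdCdf, stdCdf]
    ring
  rw [h]
  exact (intervalIntegral.integral_hasDerivAt_right (continuous_stdPdf.intervalIntegrable _ _)
    continuous_stdPdf.aestronglyMeasurable.stronglyMeasurableAtFilter
    continuous_stdPdf.continuousAt).const_add _

theorem continuous_stdCdf : Continuous stdCdf :=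
  continuous_iff_continuousAt.2 fun x => (hasDerivAt_stdCdf x).continuousAt

theorem stdCdf_eq_integral_Ici (x : ℝ) : stdCdf x = ∫ t in Set.Ici 0, stdPdf (x - t) := by
  rw [stdCdf, ← integral_indicator measurableSet_Iic, ← integral_indicator measurableSet_Ici,
    ← integral_sub_left_eq_self _ volume x]
  congr 1
  ext t
  simp [Set.indicator_apply]

/-- The inverse Mills ratio `φ / Φ` is strictly decreasing, in cross-multiplied form. -/
theorem stdPdf_mul_stdCdf_lt {b u : ℝ} (h : b < u) :
    stdPdf u * stdCdf b < stdPdf b * stdCdf u := by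
  have hInt (c x : ℝ) : IntegrableOn (fun t => c * stdPdf (x - t)) (Set.Ici 0) :=
    ((integrable_stdPdf.comp_sub_left x).const_mul c).integrableOn
  have hlt : ∀ t ∈ Set.Ioi (0 : ℝ),
      stdPdf u * stdPdf (b - t) < stdPdf b * stdPdf (u - t) := by
    intro t ht
    have ht : 0 < t := ht
    have key (p q : ℝ) : stdPdf p * stdPdf q =
        ((Real.sqrt (2 * Real.pi))⁻¹ * (Real.sqrt (2 * Real.pi))⁻¹) *
          Real.exp (-p ^ 2 / 2 + -q ^ 2 / 2) := by
      rw [Real.exp_add]; unfold stdPdf; ring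
    rw [key, key]
    refine mul_lt_mul_of_pos_left (Real.exp_lt_exp.2 ?_) (by positivity)
    nlinarith [mul_pos ht (sub_pos.2 h)]
  rw [stdCdf_eq_integral_Ici, stdCdf_eq_integral_Ici, ← integral_const_mul,
    ← integral_const_mul, ← sub_pos, ← integral_sub (hInt _ _) (hInt _ _),
    integral_Ici_eq_integral_Ioi,
    setIntegral_pos_iff_support_of_nonneg_ae
      ((ae_restrict_iff' measurableSet_Ioi).2 (ae_of_all _ fun t ht => (sub_pos.2 (hlt t ht)).le))
      (((hInt _ _).sub (hInt _ _)).mono_set Set.Ioi_subset_Ici_self)]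
  have : Set.Ioi (0 : ℝ) ⊆ Function.support
      (fun t => stdPdf b * stdPdf (u - t) - stdPdf u * stdPdf (b - t)) :=
    fun t ht => (sub_pos.2 (hlt t ht)).ne'
  rw [Set.inter_eq_right.2 this]
  simp

theorem sub_mul_stdPdf_stdCdf_pos {b u : ℝ} (h : u ≠ b) :
    0 < (u - b) * (stdPdf b * stdCdf u - stdPdf u * stdCdf b) := by
  rcases h.lt_or_gt with h | h
  · have := stdPdf_mul_stdCdf_lt h
    exact mul_pos_of_neg_of_neg (by linarith) (by linarith)
  · have := stdPdf_mul_stdCdf_lt h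
    exact mul_pos (by linarith) (by linarith)

section mvPdf

variable {n : ℕ} {μ : Fin n → ℝ} {S : Matrix (Fin n) (Fin n) ℝ}

theorem mvPdf_pos (hS : S.PosDef) (x : Fin n → ℝ) : 0 < mvPdf μ S x := by
  have := hS.det_pos
  unfold mvPdf
  positivity

theorem continuous_mvPdf : Continuous (mvPdf μ S) := by
  unfold mvPdf
  fun_prop

theorem integrable_mvPdf (hS : S.PosDef) : Integrable (mvPdf μ S) := by
  obtain ⟨B, hB⟩ : ∃ B : Matrix (Fin n) (Fin n) ℝ, S⁻¹ = Bᵀ * B := by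
    open scoped MatrixOrder in
    simpa [star_eq_conjTranspose] using
      CStarAlgebra.nonneg_iff_eq_star_mul_self.mp hS.inv.posSemidef.nonneg
  have hdet : LinearMap.det (toLin' B) ≠ 0 := by
    intro h
    rw [LinearMap.det_toLin'] at h
    have := hS.inv.det_pos
    rw [hB, det_mul, h, mul_zero] at this
    exact this.false
  have hg : Integrable (fun z : Fin n → ℝ => Real.exp (-(1 / 2) * (z ⬝ᵥ z))) := by
    have := Integrable.fintype_prod (ι := Fin n) (μ := fun _ => (volume : Measure ℝ))
      (f := fun _ (t : ℝ) => Real.exp (-(1 / 2) * t ^ 2))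
      fun _ => integrable_exp_neg_mul_sq (by norm_num)
    refine this.congr (ae_of_all _ fun z => ?_)
    simp only [← Real.exp_sum, dotProduct, Finset.mul_sum, pow_two]
  have hmap := Measure.map_linearMap_addHaar_eq_smul_addHaar
    (volume : Measure (Fin n → ℝ)) hdet
  have hcomp : Integrable (fun x : Fin n → ℝ =>
      Real.exp (-(1 / 2) * ((B *ᵥ x) ⬝ᵥ (B *ᵥ x)))) := by
    have h := hg.smul_measure
      (ENNReal.ofReal_ne_top (r := |(LinearMap.det (toLin' B))⁻¹|))
    rw [← hmap] at h
    exact h.comp_measurable (LinearMap.continuous_of_finiteDimensional _).measurable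
  refine ((hcomp.comp_sub_right μ).const_mul
    (Real.sqrt ((2 * Real.pi) ^ n * S.det))⁻¹).congr (ae_of_all _ fun x => ?_)
  simp only [mvPdf, hB]
  rw [← mulVec_mulVec, dotProduct_mulVec _ Bᵀ, vecMul_transpose]

/-- Shifting a Gaussian density along `S *ᵥ v` tilts it exponentially along `v`. -/
theorem mvPdf_add_smul_mulVec (hS : S.PosDef) (v x : Fin n → ℝ) (t : ℝ) :
    mvPdf μ S (x + t • (S *ᵥ v)) =
      mvPdf μ S x * Real.exp (-(t * (v ⬝ᵥ (x - μ)) + t ^ 2 / 2 * (v ⬝ᵥ (S *ᵥ v)))) := by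
  have hdet : IsUnit S.det := hS.det_pos.ne'.isUnit
  have hsymm : Sᵀ = S := by simpa using hS.isHermitian.eq
  have hinv : S⁻¹ *ᵥ (S *ᵥ v) = v := by
    rw [mulVec_mulVec, nonsing_inv_mul _ hdet, one_mulVec]
  have hinv' (w : Fin n → ℝ) : (S *ᵥ v) ⬝ᵥ (S⁻¹ *ᵥ w) = v ⬝ᵥ w := by
    rw [dotProduct_mulVec, ← mulVec_transpose, transpose_nonsing_inv, hsymm, hinv]
  have hx : x + t • (S *ᵥ v) - μ = (x - μ) + t • (S *ᵥ v) := by abel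
  simp only [mvPdf]
  rw [mul_assoc, ← Real.exp_add, hx]
  congr 2
  simp only [mulVec_add, mulVec_smul, add_dotProduct, dotProduct_add, smul_dotProduct,
    dotProduct_smul, smul_eq_mul, hinv, hinv', dotProduct_comm _ v]
  ring

theorem integrable_mvPdf_mul_exp (hS : S.PosDef) (v : Fin n → ℝ) (c : ℝ) :
    Integrable (fun x => mvPdf μ S x * Real.exp (c * (v ⬝ᵥ x))) := by
  refine (((integrable_mvPdf (μ := μ) hS).comp_add_right ((-c) • (S *ᵥ v))).mul_const
    (Real.exp (c * (v ⬝ᵥ μ) + c ^ 2 / 2 * (v ⬝ᵥ (S *ᵥ v))))).congr (ae_of_all _ fun x => ?_)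
  beta_reduce
  rw [mvPdf_add_smul_mulVec hS, mul_assoc, ← Real.exp_add, dotProduct_sub]
  congr 2
  ring

theorem one_add_sq_le_exp_add_exp_neg (x : ℝ) : 1 + x ^ 2 ≤ 2 * (Real.exp x + Real.exp (-x)) := by
  rw [← sq_abs]
  have h := Real.quadratic_le_exp_of_nonneg (abs_nonneg x)
  have h0 := abs_nonneg x
  rcases abs_cases x with ⟨hx, -⟩ | ⟨hx, -⟩ <;> rw [hx] at h h0 ⊢
  · nlinarith [Real.exp_pos (-x)]
  · nlinarith [Real.exp_pos x]

theorem integrable_mvPdf_mul (hS : S.PosDef) (v : Fin n → ℝ) {f : ℝ → ℝ} (hf : Continuous f)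
    {K : ℝ} (hK : ∀ x, |f x| ≤ K * (1 + x ^ 2)) :
    Integrable (fun x => mvPdf μ S x * f (v ⬝ᵥ x)) := by
  have hK0 : 0 ≤ K := by simpa using (abs_nonneg _).trans (hK 0)
  have hdom := ((integrable_mvPdf_mul_exp (μ := μ) hS v 1).add
    (integrable_mvPdf_mul_exp (μ := μ) hS v (-1))).const_mul (K * 2)
  refine hdom.mono' (continuous_mvPdf.mul (hf.comp (by fun_prop))).aestronglyMeasurable
    (ae_of_all _ fun x => ?_)
  have hp := mvPdf_pos (μ := μ) hS x
  rw [Real.norm_eq_abs, abs_mul, abs_of_pos hp]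
  calc mvPdf μ S x * |f (v ⬝ᵥ x)|
      ≤ mvPdf μ S x * (K * (2 * (Real.exp (v ⬝ᵥ x) + Real.exp (-(v ⬝ᵥ x))))) := by
        gcongr
        exact (hK _).trans (by gcongr; exact one_add_sq_le_exp_add_exp_neg _)
    _ = _ := by simp only [Pi.add_apply, one_mul, neg_one_mul]; ring

theorem hasLineDerivAt_mvPdf (hS : S.PosDef) (v x : Fin n → ℝ) :
    HasLineDerivAt ℝ (mvPdf μ S) (-(v ⬝ᵥ (x - μ)) * mvPdf μ S x) x (S *ᵥ v) := by
  unfold HasLineDerivAt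
  simp only [mvPdf_add_smul_mulVec hS]
  have h := ((((hasDerivAt_id (0 : ℝ)).mul_const (v ⬝ᵥ (x - μ))).add
    ((((hasDerivAt_id (0 : ℝ)).pow 2).div_const 2).mul_const
      (v ⬝ᵥ (S *ᵥ v)))).neg.exp).const_mul (mvPdf μ S x)
  refine h.congr_deriv ?_
  simp
  ring

/-- **Stein's lemma** for the linear functional `v ⬝ᵥ ·` of a multivariate Gaussian. -/
theorem integral_mvPdf_mul_sub_mul (hS : S.PosDef) (v : Fin n → ℝ) {f f' : ℝ → ℝ}
    (hf : ∀ x, HasDerivAt f (f' x) x)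
    (hInt : Integrable (fun x => mvPdf μ S x * f (v ⬝ᵥ x)))
    (hInt' : Integrable (fun x => mvPdf μ S x * f' (v ⬝ᵥ x)))
    (hInt_sub : Integrable (fun x => mvPdf μ S x * ((v ⬝ᵥ x - v ⬝ᵥ μ) * f (v ⬝ᵥ x)))) :
    ∫ x, mvPdf μ S x * ((v ⬝ᵥ x - v ⬝ᵥ μ) * f (v ⬝ᵥ x)) =
      (v ⬝ᵥ (S *ᵥ v)) * ∫ x, mvPdf μ S x * f' (v ⬝ᵥ x) := by
  have hline (x : Fin n → ℝ) : HasLineDerivAt ℝ (fun x => f (v ⬝ᵥ x))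
      ((v ⬝ᵥ (S *ᵥ v)) * f' (v ⬝ᵥ x)) x (S *ᵥ v) := by
    unfold HasLineDerivAt
    simp only [dotProduct_add, dotProduct_smul, smul_eq_mul]
    have h1 := ((hasDerivAt_id (0 : ℝ)).mul_const (v ⬝ᵥ (S *ᵥ v))).const_add (v ⬝ᵥ x)
    have h2 : HasDerivAt f (f' (v ⬝ᵥ x)) (v ⬝ᵥ x + id 0 * (v ⬝ᵥ (S *ᵥ v))) := by
      simpa using hf (v ⬝ᵥ x)
    exact (h2.comp (0 : ℝ) h1).congr_deriv (by ring)
  have h := integral_bilinear_hasLineDerivAt_right_eq_neg_left_of_integrable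
    (μ := (volume : Measure (Fin n → ℝ))) (v := S *ᵥ v) (B := ContinuousLinearMap.mul ℝ ℝ)
    (f := mvPdf μ S) (f' := fun x => -(v ⬝ᵥ (x - μ)) * mvPdf μ S x)
    (g := fun x => f (v ⬝ᵥ x)) (g' := fun x => (v ⬝ᵥ (S *ᵥ v)) * f' (v ⬝ᵥ x))
    (hInt_sub.neg.congr (ae_of_all _ fun x => by
      simp only [Pi.neg_apply, dotProduct_sub, ContinuousLinearMap.mul_apply']; ring))
    ((hInt'.const_mul (v ⬝ᵥ (S *ᵥ v))).congr (ae_of_all _ fun x => by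
      simp only [ContinuousLinearMap.mul_apply']; ring))
    hInt (fun x _ => hasLineDerivAt_mvPdf hS v x) (fun x _ => hline x)
  simp only [ContinuousLinearMap.mul_apply'] at h
  rw [← integral_neg] at h
  rw [← integral_const_mul]
  refine Eq.trans ?_ (h.symm.trans ?_) <;> refine integral_congr_ae (ae_of_all _ fun x => ?_)
  · simp only [dotProduct_sub]; ring
  · ring

theorem integrable_mvPdf_mul_quadratic_mul (hS : S.PosDef) (v : Fin n → ℝ) {c : ℝ → ℝ}
    (hc : Continuous c) (hc1 : ∀ x, |c x| ≤ 1) (α β γ : ℝ) :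
    Integrable (fun x => mvPdf μ S x *
      ((α * (v ⬝ᵥ x) ^ 2 + β * (v ⬝ᵥ x) + γ) * c (v ⬝ᵥ x))) := by
  refine integrable_mvPdf_mul hS v (f := fun x => (α * x ^ 2 + β * x + γ) * c x)
    (K := |α| + |β| + |γ|) (by fun_prop) fun x => ?_
  have hx : |x| ≤ 1 + x ^ 2 := by
    rw [← sq_abs]; nlinarith [sq_nonneg (|x| - 1), abs_nonneg x]
  calc |(α * x ^ 2 + β * x + γ) * c x|
      = |α * x ^ 2 + β * x + γ| * |c x| := abs_mul _ _
    _ ≤ |α * x ^ 2 + β * x + γ| := mul_le_of_le_one_right (abs_nonneg _) (hc1 x)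
    _ ≤ |α| * x ^ 2 + |β| * |x| + |γ| := by
        refine (abs_add_three _ _ _).trans_eq ?_
        rw [abs_mul, abs_mul, abs_of_nonneg (sq_nonneg x)]
    _ ≤ (|α| + |β| + |γ|) * (1 + x ^ 2) := by
        nlinarith [abs_nonneg α, mul_le_mul_of_nonneg_left hx (abs_nonneg β),
          mul_nonneg (abs_nonneg γ) (sq_nonneg x)]

theorem integral_mvPdf_mul_stdCdf_pos (hS : S.PosDef) (v : Fin n → ℝ) (y : ℝ) :
    0 < ∫ x, mvPdf μ S x * stdCdf (y * (v ⬝ᵥ x)) := by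
  have hcont : Continuous fun x => stdCdf (y * x) := continuous_stdCdf.comp (by fun_prop)
  refine integral_pos_of_integrable_nonneg_nonzero (x := 0)
    (continuous_mvPdf.mul (hcont.comp (by fun_prop)))
    (integrable_mvPdf_mul hS v hcont (K := 1) fun x => ?_)
    (fun x => (mul_pos (mvPdf_pos hS x) (stdCdf_pos _)).le)
    (mul_pos (mvPdf_pos hS _) (stdCdf_pos _)).ne'
  rw [abs_of_pos (stdCdf_pos _)]
  nlinarith [stdCdf_le_one (y * x), sq_nonneg x]

/-- The unnormalized second moment of a probit-tilted Gaussian along `v`, about the tilted mean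
`a`, is smaller than the variance of the untilted Gaussian times the normalizing constant. -/
theorem integral_mvPdf_mul_sq_mul_stdCdf_lt (hS : S.PosDef) {v : Fin n → ℝ} (hv : v ≠ 0)
    {y : ℝ} (hy0 : y ≠ 0) (hy1 : |y| ≤ 1) {a : ℝ}
    (ha : ∫ x, mvPdf μ S x * ((v ⬝ᵥ x - a) * stdCdf (y * (v ⬝ᵥ x))) = 0) :
    ∫ x, mvPdf μ S x * ((v ⬝ᵥ x - a) ^ 2 * stdCdf (y * (v ⬝ᵥ x))) <
      (v ⬝ᵥ (S *ᵥ v)) * ∫ x, mvPdf μ S x * stdCdf (y * (v ⬝ᵥ x)) := by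
  have hs : 0 < v ⬝ᵥ (S *ᵥ v) := by simpa using hS.dotProduct_mulVec_pos hv
  have hΦ : Continuous fun x => stdCdf (y * x) := continuous_stdCdf.comp (by fun_prop)
  have hφ : Continuous fun x => y * stdPdf (y * x) :=
    continuous_const.mul (continuous_stdPdf.comp (by fun_prop))
  have hΦ1 (x : ℝ) : |stdCdf (y * x)| ≤ 1 := by
    rw [abs_of_pos (stdCdf_pos _)]; exact stdCdf_le_one _
  have hφ1 (x : ℝ) : |y * stdPdf (y * x)| ≤ 1 := by
    rw [abs_mul, abs_of_pos (stdPdf_pos _)]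
    exact mul_le_one₀ hy1 (stdPdf_pos _).le (stdPdf_le_one _)
  have iΦ := integrable_mvPdf_mul_quadratic_mul (μ := μ) hS v hΦ hΦ1
  have iφ := integrable_mvPdf_mul_quadratic_mul (μ := μ) hS v hφ hφ1
  have i0 : Integrable (fun x => mvPdf μ S x * stdCdf (y * (v ⬝ᵥ x))) :=
    (iΦ 0 0 1).congr (ae_of_all _ fun x => by ring)
  have i1 : Integrable (fun x => mvPdf μ S x * ((v ⬝ᵥ x - a) * stdCdf (y * (v ⬝ᵥ x)))) :=
    (iΦ 0 1 (-a)).congr (ae_of_all _ fun x => by ring)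
  have i2 : Integrable (fun x => mvPdf μ S x * ((v ⬝ᵥ x - a) ^ 2 * stdCdf (y * (v ⬝ᵥ x)))) :=
    (iΦ 1 (-2 * a) (a ^ 2)).congr (ae_of_all _ fun x => by ring)
  have j1 : Integrable
      (fun x => mvPdf μ S x * ((v ⬝ᵥ x - a) * (y * stdPdf (y * (v ⬝ᵥ x))))) :=
    (iφ 0 1 (-a)).congr (ae_of_all _ fun x => by ring)
  have hstein := integral_mvPdf_mul_sub_mul (μ := μ) hS v
    (f := fun x => (x - a) * stdCdf (y * x))
    (f' := fun x => stdCdf (y * x) + (x - a) * (y * stdPdf (y * x)))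
    (fun x => by
      have h := ((hasDerivAt_id x).sub_const a).mul
        ((hasDerivAt_stdCdf (y * x)).comp x ((hasDerivAt_id x).const_mul y))
      refine h.congr_deriv ?_
      simp only [Function.comp_apply, id]
      ring)
    i1 ((i0.add j1).congr (ae_of_all _ fun x => by simp only [Pi.add_apply]; ring))
    ((i2.add (i1.const_mul (a - v ⬝ᵥ μ))).congr
      (ae_of_all _ fun x => by simp only [Pi.add_apply]; ring))
  have hleft : ∫ x, mvPdf μ S x *
        ((v ⬝ᵥ x - v ⬝ᵥ μ) * ((v ⬝ᵥ x - a) * stdCdf (y * (v ⬝ᵥ x)))) =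
      ∫ x, mvPdf μ S x * ((v ⬝ᵥ x - a) ^ 2 * stdCdf (y * (v ⬝ᵥ x))) := by
    rw [← add_zero (∫ x, mvPdf μ S x * ((v ⬝ᵥ x - a) ^ 2 * stdCdf (y * (v ⬝ᵥ x)))),
      ← mul_zero (a - v ⬝ᵥ μ), ← ha, ← integral_const_mul,
      ← integral_add i2 (i1.const_mul _)]
    exact integral_congr_ae (ae_of_all _ fun x => by ring)
  have hright : ∫ x, mvPdf μ S x *
        (stdCdf (y * (v ⬝ᵥ x)) + (v ⬝ᵥ x - a) * (y * stdPdf (y * (v ⬝ᵥ x)))) =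
      (∫ x, mvPdf μ S x * stdCdf (y * (v ⬝ᵥ x))) +
        ∫ x, mvPdf μ S x * ((v ⬝ᵥ x - a) * (y * stdPdf (y * (v ⬝ᵥ x)))) := by
    rw [← integral_add i0 j1]
    exact integral_congr_ae (ae_of_all _ fun x => by ring)
  have hneg : ∫ x, mvPdf μ S x * ((v ⬝ᵥ x - a) * (y * stdPdf (y * (v ⬝ᵥ x)))) < 0 := by
    have hv0 : v ⬝ᵥ v ≠ 0 := fun h => hv (dotProduct_self_eq_zero.1 h)
    have hdecomp : ∀ x : Fin n → ℝ, y * stdPdf (y * a) *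
          (mvPdf μ S x * ((v ⬝ᵥ x - a) * stdCdf (y * (v ⬝ᵥ x)))) -
        stdCdf (y * a) * (mvPdf μ S x * ((v ⬝ᵥ x - a) * (y * stdPdf (y * (v ⬝ᵥ x))))) =
        mvPdf μ S x * ((y * (v ⬝ᵥ x) - y * a) *
          (stdPdf (y * a) * stdCdf (y * (v ⬝ᵥ x)) -
            stdPdf (y * (v ⬝ᵥ x)) * stdCdf (y * a))) := fun x => by ring
    have hpos : 0 < ∫ x, (y * stdPdf (y * a) *
          (mvPdf μ S x * ((v ⬝ᵥ x - a) * stdCdf (y * (v ⬝ᵥ x)))) -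
        stdCdf (y * a) *
          (mvPdf μ S x * ((v ⬝ᵥ x - a) * (y * stdPdf (y * (v ⬝ᵥ x)))))) := by
      refine integral_pos_of_integrable_nonneg_nonzero (x := ((a + 1) / (v ⬝ᵥ v)) • v) ?_
        ((i1.const_mul _).sub (j1.const_mul _)) (fun x => ?_) ?_
      · have := continuous_mvPdf (μ := μ) (S := S)
        have := continuous_stdCdf
        have := continuous_stdPdf
        fun_prop
      · simp only [Pi.zero_apply, hdecomp]
        refine mul_nonneg (mvPdf_pos hS x).le ?_
        rcases eq_or_ne (y * (v ⬝ᵥ x)) (y * a) with h | h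
        · simp [h]
        · exact (sub_mul_stdPdf_stdCdf_pos h).le
      · rw [hdecomp, dotProduct_smul, smul_eq_mul, div_mul_cancel₀ _ hv0]
        refine (mul_pos (mvPdf_pos hS _) (sub_mul_stdPdf_stdCdf_pos fun h => ?_)).ne'
        linarith [mul_left_cancel₀ hy0 h]
    rw [integral_sub (i1.const_mul _) (j1.const_mul _), integral_const_mul,
      integral_const_mul, ha] at hpos
    by_contra! h
    nlinarith [stdCdf_pos (y * a), mul_nonneg (stdCdf_pos (y * a)).le h]
  rw [hleft, hright] at hstein
  rw [hstein]
  exact mul_lt_mul_of_pos_left (by linarith) hs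

end mvPdf

/-- A probit update strictly decreases the measured coordinate's marginal
variance: `v'Σ⁺v < v'Σv`, where `Σ⁺` is the covariance of the tilted posterior
`p(m) ∝ φ(m; μ, Σ)Φ(y v'm)`. -/
theorem stmt19 {n : ℕ} (μ : Fin n → ℝ) (S : Matrix (Fin n) (Fin n) ℝ)
    (hS : S.PosDef) (v : Fin n → ℝ) (hv : ∃ i, v = Pi.single i 1)
    (y : ℝ) (hy : y = -1 ∨ y = 1)
    (Z : ℝ) (hZ : Z = ∫ m : Fin n → ℝ, mvPdf μ S m * stdCdf (y * (v ⬝ᵥ m)))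
    (p : (Fin n → ℝ) → ℝ)
    (hp : p = fun m => Z⁻¹ * mvPdf μ S m * stdCdf (y * (v ⬝ᵥ m)))
    (μplus : Fin n → ℝ) (hμplus : ∀ j, μplus j = ∫ m : Fin n → ℝ, m j * p m)
    (Splus : Matrix (Fin n) (Fin n) ℝ)
    (hSplus : ∀ i j, Splus i j =
      ∫ m : Fin n → ℝ, (m i - μplus i) * (m j - μplus j) * p m) :
    v ⬝ᵥ (Splus *ᵥ v) < v ⬝ᵥ (S *ᵥ v) := by
  obtain ⟨i, rfl⟩ := hv
  have hdot (x : Fin n → ℝ) : (Pi.single i 1 : Fin n → ℝ) ⬝ᵥ x = x i := by simp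
  have hZpos : 0 < Z := hZ ▸ integral_mvPdf_mul_stdCdf_pos hS _ y
  have hy0 : y ≠ 0 := by rcases hy with rfl | rfl <;> norm_num
  have hy1 : |y| ≤ 1 := by rcases hy with rfl | rfl <;> norm_num
  have hv0 : (Pi.single i 1 : Fin n → ℝ) ≠ 0 := by simp
  have hΦ : Continuous fun x => stdCdf (y * x) := continuous_stdCdf.comp (by fun_prop)
  have hInt := integrable_mvPdf_mul_quadratic_mul (μ := μ) hS (Pi.single i 1) hΦ
    (fun x => by rw [abs_of_pos (stdCdf_pos _)]; exact stdCdf_le_one _)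
  have hmean : ∫ x, mvPdf μ S x * (((Pi.single i 1 : Fin n → ℝ) ⬝ᵥ x - μplus i) *
      stdCdf (y * ((Pi.single i 1 : Fin n → ℝ) ⬝ᵥ x))) = 0 := by
    have h0 := (hInt 0 0 1).const_mul (μplus i)
    have h1 := hInt 0 1 0
    have hμ : ∫ x, mvPdf μ S x * ((0 * ((Pi.single i 1 : Fin n → ℝ) ⬝ᵥ x) ^ 2 +
        1 * ((Pi.single i 1 : Fin n → ℝ) ⬝ᵥ x) + 0) *
        stdCdf (y * ((Pi.single i 1 : Fin n → ℝ) ⬝ᵥ x))) = Z * μplus i := by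
      rw [hμplus, hp, ← integral_const_mul]
      refine integral_congr_ae (ae_of_all _ fun x => ?_)
      simp only [hdot]
      field_simp
      ring
    have hZ' : ∫ x, mvPdf μ S x * ((0 * ((Pi.single i 1 : Fin n → ℝ) ⬝ᵥ x) ^ 2 +
        0 * ((Pi.single i 1 : Fin n → ℝ) ⬝ᵥ x) + 1) *
        stdCdf (y * ((Pi.single i 1 : Fin n → ℝ) ⬝ᵥ x))) = Z := by
      rw [hZ]
      exact integral_congr_ae (ae_of_all _ fun x => by ring)
    have h := integral_sub h1 h0
    rw [integral_const_mul, hμ, hZ', mul_comm Z, sub_self] at h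
    rw [← h]
    exact integral_congr_ae (ae_of_all _ fun x => by ring)
  have hlt := integral_mvPdf_mul_sq_mul_stdCdf_lt hS hv0 hy0 hy1 hmean
  rw [← hZ] at hlt
  have hvar : (Pi.single i 1 : Fin n → ℝ) ⬝ᵥ (Splus *ᵥ Pi.single i 1) =
      Z⁻¹ * ∫ x, mvPdf μ S x * (((Pi.single i 1 : Fin n → ℝ) ⬝ᵥ x - μplus i) ^ 2 *
        stdCdf (y * ((Pi.single i 1 : Fin n → ℝ) ⬝ᵥ x))) := by
    rw [hdot, mulVec_single_one, col_apply, hSplus, hp, ← integral_const_mul]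
    exact integral_congr_ae (ae_of_all _ fun x => by simp only [hdot]; ring)
  rw [hvar, inv_mul_lt_iff₀ hZpos, mul_comm]
  exact hlt
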